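/- Let q ≥ 2, ℓ ≥ 1, x ∈ Z_q^n (indexed x_1, …, x_n), and let i ≥ 0 and j ≥ 1 satisfy i + j ≤ n − 2ℓ. Then the palindromic deletions π^δ_{i,ℓ}(x) and π^δ_{i+j,ℓ}(x) are both defined and yield the same word if and only if all of the following hold: x_{i+ℓ+1+m} = x_{i+ℓ−m} for all m ∈ {0, …, ℓ−1}; x_{i+ℓ+j+1+m} = x_{i+ℓ+j−m} for all m ∈ {0, …, ℓ−1}; and x_{i+2ℓ+1+m} = x_{i+ℓ+1+m} for all m ∈ {0, …, j−1}. -/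

import Mathlib

/-!
Both halves of the equivalence are read off letter by letter.

* `pDelDefinedAt_iff`: the deletion at position `i` is defined exactly when the window
  `x_{i+1}, …, x_{i+2ℓ}` is a palindrome, i.e. symmetric about its centre.
* `pdelAt_eq_iff`: the two results agree on the first `i + ℓ` letters, and from letter
  `i + j + ℓ + 1` on both equal `x` shifted by `ℓ`. On the `j` letters in between, the deletion at
  `i` shows `x_{i+2ℓ+1+m}` while the deletion at `i + j` still shows `x_{i+ℓ+1+m}`, so equality of
  the results is exactly `ℓ`-periodicity of `x` on that stretch.
-/

namespace DupPaper

variable {α : Type*}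

/-- `y` is obtained from `x` by one tandem duplication of length `ℓ`. -/
def TDup (ℓ : ℕ) (x y : List α) : Prop :=
  ∃ u v w : List α, v.length = ℓ ∧ x = u ++ v ++ w ∧ y = u ++ v ++ v ++ w

/-- `y` is obtained from `x` by one tandem deletion of length `ℓ`. -/
def TDel (ℓ : ℕ) (x y : List α) : Prop :=
  ∃ u v w : List α, v.length = ℓ ∧ x = u ++ v ++ v ++ w ∧ y = u ++ v ++ w

/-- `y` is obtained from `x` by one palindromic duplication of length `ℓ`. -/
def PDup (ℓ : ℕ) (x y : List α) : Prop :=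
  ∃ u v w : List α, v.length = ℓ ∧ x = u ++ v ++ w ∧ y = u ++ v ++ v.reverse ++ w

/-- `y` is obtained from `x` by one palindromic deletion of length `ℓ`. -/
def PDel (ℓ : ℕ) (x y : List α) : Prop :=
  ∃ u v w : List α, v.length = ℓ ∧ x = u ++ v ++ v.reverse ++ w ∧ y = u ++ v ++ w

/-- `y` is reached from `x` by exactly `k` steps of the relation `rel`. -/
def reachK (rel : List α → List α → Prop) : ℕ → List α → List α → Prop
  | 0, x, y => x = y
  | k + 1, x, y => ∃ z, rel x z ∧ reachK rel k z y

/-- The sphere of all words reachable from `x` by at most `t` operations of type `rel`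
(in particular it contains `x` itself). -/
def sphere (rel : List α → List α → Prop) (t : ℕ) (x : List α) : Set (List α) :=
  {y | ∃ k ≤ t, reachK rel k x y}

/-- A code `C` is `t`-error correcting for the error type `rel` if distinct codewords have
disjoint spheres. -/
def Correcting (rel : List α → List α → Prop) (t : ℕ) (C : Set (List α)) : Prop :=
  ∀ c₁ ∈ C, ∀ c₂ ∈ C, (sphere rel t c₁ ∩ sphere rel t c₂).Nonempty → c₁ = c₂

/-- The list of maximal runs (maximal blocks of identical consecutive symbols) of a word. -/
def runs [DecidableEq α] : List α → List (List α)
  | [] => []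
  | a :: rest =>
    match runs rest with
    | [] => [[a]]
    | r :: rs => if r.head? = some a then (a :: r) :: rs else [a] :: r :: rs

/-- `r(x)`: the number of runs of `x`. -/
def numRuns [DecidableEq α] (x : List α) : ℕ := (runs x).length

/-- `r_i(x)`: the number of runs of `x` of length exactly `i`. -/
def numRunsEq [DecidableEq α] (x : List α) (i : ℕ) : ℕ :=
  ((runs x).filter (fun r => r.length = i)).length

/-- `r_{≥ i}(x)`: the number of runs of `x` of length at least `i`. -/
def numRunsGe [DecidableEq α] (x : List α) (i : ℕ) : ℕ :=
  ((runs x).filter (fun r => i ≤ r.length)).length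

/-- `r_{I,2}(x)`: the number of runs of length exactly `2` located in the interior of `x`,
i.e. runs that are neither the first nor the last run of `x`. -/
def numInteriorRuns2 [DecidableEq α] (x : List α) : ℕ :=
  ((((runs x).drop 1).dropLast).filter (fun r => r.length = 2)).length

/-- The second component `v` of the `ℓ`-step derivative `φ_ℓ(x) = (u, v)`:
`v = (x_{ℓ+1}, …, x_n) − (x_1, …, x_{n−ℓ})` componentwise in `Z_q`. -/
def derivV (q ℓ : ℕ) (x : List (ZMod q)) : List (ZMod q) :=
  List.zipWith (· - ·) (x.drop ℓ) x

/-- Hamming weight: the number of nonzero entries. -/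
def wtH {q : ℕ} (v : List (ZMod q)) : ℕ := (v.filter (fun a => a ≠ 0)).length

/-- The lengths `(m_0, m_1, …, m_p)` of the (possibly empty) maximal zero runs of `v`,
where `v = (0^{m_0}, w_1, 0^{m_1}, w_2, …, w_p, 0^{m_p})` with all `w_i ≠ 0`. -/
def zeroRunLengths {q : ℕ} : List (ZMod q) → List ℕ
  | [] => [0]
  | a :: rest =>
    let t := zeroRunLengths rest
    if a = 0 then
      match t with
      | [] => [1]
      | m :: ms => (m + 1) :: ms
    else 0 :: t

/-- The `ℓ`-zero signature `σ_ℓ(v) = (⌊m_0/ℓ⌋, …, ⌊m_p/ℓ⌋)` of `v = derivV q ℓ x`. -/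
def sig (q ℓ : ℕ) (x : List (ZMod q)) : List ℕ :=
  (zeroRunLengths (derivV q ℓ x)).map (· / ℓ)

/-- The trunk `μ_ℓ(v)`: every maximal zero run of length `m` is shortened to length
`m mod ℓ`. -/
def trunk (q ℓ : ℕ) (v : List (ZMod q)) : List (ZMod q) :=
  ((runs v).map (fun r =>
    if r.head? = some (0 : ZMod q) then List.replicate (r.length % ℓ) (0 : ZMod q) else r)).flatten

/-- The root `ρ_ℓ(x) = (u, μ_ℓ(v))` where `φ_ℓ(x) = (u, v)` is the `ℓ`-step derivative. -/
def root (q ℓ : ℕ) (x : List (ZMod q)) : List (ZMod q) × List (ZMod q) :=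
  (x.take ℓ, trunk q ℓ (derivV q ℓ x))

/-- `ℓ1`-distance of two lists of naturals. -/
def l1diff (a b : List ℕ) : ℕ := (List.zipWith (fun s t => max s t - min s t) a b).sum

/-- The tandem duplication distance `d_{τ,ℓ}`. -/
def tdDist (q ℓ : ℕ) (x₁ x₂ : List (ZMod q)) : ℕ∞ :=
  if root q ℓ x₁ = root q ℓ x₂ then (l1diff (sig q ℓ x₁) (sig q ℓ x₂) : ℕ∞) else ⊤

/-- The palindromic duplication `π_{i,ℓ}(x) = (u v v^R w)` at position `i`,
where `x = (u v w)`, `|u| = i`, `|v| = ℓ`. -/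
def pdupAt (i ℓ : ℕ) (x : List α) : List α :=
  x.take (i + ℓ) ++ ((x.drop i).take ℓ).reverse ++ x.drop (i + ℓ)

/-- The result `(u v w)` of the palindromic deletion `π^δ_{i,ℓ}` applied to
`x = (u v v^R w)` with `|u| = i`, `|v| = ℓ`. -/
def pdelAt (i ℓ : ℕ) (x : List α) : List α :=
  x.take (i + ℓ) ++ x.drop (i + 2 * ℓ)

/-- The palindromic deletion `π^δ_{i,ℓ}` is defined at position `i` of `x`, i.e. `x` has the
form `(u v v^R w)` with `|u| = i` and `|v| = ℓ`. -/
def PDelDefinedAt (q ℓ i : ℕ) (x : List (ZMod q)) : Prop :=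
  ∃ u v w : List (ZMod q), u.length = i ∧ v.length = ℓ ∧ x = u ++ v ++ v.reverse ++ w

/-- `A(n', ℓ', ω)`: the number of words in `Z_q^{n'}` whose maximal zero runs all have length
at most `ℓ'` and whose Hamming weight is `ω`. -/
noncomputable def Acount (q n' ℓ' ω : ℕ) : ℕ :=
  {x : Fin n' → ZMod q | wtH (List.ofFn x) = ω ∧
    ∀ r ∈ runs (List.ofFn x), r.head? = some (0 : ZMod q) → r.length ≤ ℓ'}.ncard

/-- Integer binomial coefficient with the conventions `C(a,b) = 0` for `a ≥ 0 > b` or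
`0 ≤ a < b`, `C(-1,-1) = 1`, and `C(a,-1) = 0` for `a ≥ 0`. -/
def ichoose (a b : ℤ) : ℕ :=
  if a = -1 ∧ b = -1 then 1
  else if 0 ≤ a ∧ 0 ≤ b then Nat.choose a.toNat b.toNat
  else 0

/-- `r^{(0)}(A^π_ℓ(x))`: the number of maximal blocks of consecutive all-zero columns of the
matrix `A^π_ℓ(x) ∈ Z_q^{ℓ × (n−2ℓ+1)}` whose entry in row `s` and column `c`
(`1 ≤ s ≤ ℓ`, `1 ≤ c ≤ n−2ℓ+1`) is `x_{2ℓ+c−s} − x_{c+s−1}`. -/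
def zeroColBlocks (q ℓ n : ℕ) (x : List (ZMod q)) : ℕ :=
  ((runs ((List.range (n - 2 * ℓ + 1)).map (fun c =>
      (List.range ℓ).all (fun s =>
        x.getD (2 * ℓ + c - s - 1) (0 : ZMod q) = x.getD (c + s) (0 : ZMod q))))).filter
    (fun r => r.head? = some true)).length

theorem pDelDefinedAt_iff (q ℓ i : ℕ) (x : List (ZMod q)) (h : i + 2 * ℓ ≤ x.length) :
    PDelDefinedAt q ℓ i x ↔
      ∀ m < ℓ, x.getD (i + ℓ + m) 0 = x.getD (i + ℓ - m - 1) 0 := by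
  constructor
  · rintro ⟨u, v, w, rfl, rfl, rfl⟩ m hm
    simp only [List.getD_eq_getElem?_getD]
    grind
  · intro H
    refine ⟨x.take i, (x.drop i).take ℓ, x.drop (i + 2 * ℓ), by grind, by grind, ?_⟩
    have key : ∀ k (h₁ : i + ℓ ≤ k) (h₂ : k < i + 2 * ℓ),
        x[k]'(by omega) = x[2 * i + 2 * ℓ - 1 - k]'(by omega) := by
      intro k h₁ h₂
      -- The letter at index `k` of the right half is at offset `m = k - i - ℓ` from the centre.
      have := H (k - i - ℓ) (by omega)
      rw [show i + ℓ + (k - i - ℓ) = k by omega,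
        show i + ℓ - (k - i - ℓ) - 1 = 2 * i + 2 * ℓ - 1 - k by omega,
        List.getD_eq_getElem _ _ (by omega), List.getD_eq_getElem _ _ (by omega)] at this
      exact this
    apply List.ext_getElem
    · grind
    · intro k h₁ h₂
      by_cases h₃ : i + ℓ ≤ k ∧ k < i + 2 * ℓ
      · rw [key k h₃.1 h₃.2]
        grind
      · clear H key
        rcases Nat.lt_or_ge k (i + ℓ) with h₄ | h₄
        · grind
        · rw [List.getElem_append_right (by grind)]
          simp only [List.getElem_drop]
          congr 1
          grind

theorem pdelAt_eq_iff (q ℓ i j : ℕ) (x : List (ZMod q)) (h : i + j + 2 * ℓ ≤ x.length) :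
    pdelAt i ℓ x = pdelAt (i + j) ℓ x ↔
      ∀ m < j, x.getD (i + 2 * ℓ + m) 0 = x.getD (i + ℓ + m) 0 := by
  unfold pdelAt
  constructor
  · intro H m hm
    have := congrArg (fun l => l[i + ℓ + m]?) H
    simp only [List.getD_eq_getElem?_getD]
    grind
  · intro H
    apply List.ext_getElem?
    intro k
    by_cases h₁ : i + ℓ ≤ k ∧ k < i + ℓ + j
    · have := H (k - i - ℓ) (by omega)
      rw [List.getD_eq_getElem _ _ (by omega), List.getD_eq_getElem _ _ (by omega)] at this
      grind
    · clear H
      rcases Nat.lt_or_ge k (i + ℓ) with h₂ | h₂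
      · grind
      · rw [List.getElem?_append_right (by grind), List.getElem?_append_right (by grind)]
        simp only [List.getElem?_drop]
        congr 1
        grind

/-- Conditions for two palindromic deletions at positions `i` and `i+j`, `j ≥ 1`, to both be
defined and yield the same word (indices are 1-based: `x_k` is `x.getD (k-1) 0`). -/
theorem stmt19 (q ℓ n : ℕ) (hq : 2 ≤ q) (hℓ : 1 ≤ ℓ) (x : List (ZMod q)) (hx : x.length = n)
    (i j : ℕ) (hj : 1 ≤ j) (hij : i + j + 2 * ℓ ≤ n) :
    (PDelDefinedAt q ℓ i x ∧ PDelDefinedAt q ℓ (i + j) x ∧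
        pdelAt i ℓ x = pdelAt (i + j) ℓ x) ↔
      ((∀ m < ℓ, x.getD (i + ℓ + m) 0 = x.getD (i + ℓ - m - 1) 0) ∧
       (∀ m < ℓ, x.getD (i + ℓ + j + m) 0 = x.getD (i + ℓ + j - m - 1) 0) ∧
       (∀ m < j, x.getD (i + 2 * ℓ + m) 0 = x.getD (i + ℓ + m) 0)) := by
  subst hx
  rw [pDelDefinedAt_iff q ℓ i x (by omega), pDelDefinedAt_iff q ℓ (i + j) x (by omega),
    pdelAt_eq_iff q ℓ i j x hij, show i + j + ℓ = i + ℓ + j by omega]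

end DupPaper
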